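/- If F ⊆ 𝕋^d is an analytic set with dim_H F > s, then there exists a nonempty closed set H ⊆ F such that dim_H(Q ∩ H) > s for every dyadic cube Q with Q ∩ H ≠ ∅. -/

import Mathlib

open MeasureTheory Filter Set Metric ENNReal

noncomputable section

/-- The level-`n` dyadic cube of the torus `𝕋^d` with index `k`: the image under the
quotient map of `∏_i [k_i 2^{-n}, (k_i + 1) 2^{-n})`. -/
def dyadicCube (d n : ℕ) (k : Fin d → Fin (2 ^ n)) : Set (Fin d → AddCircle (1 : ℝ)) :=
  Set.univ.pi fun i =>
    ((↑·) : ℝ → AddCircle (1 : ℝ)) '' Set.Ico ((k i : ℝ) / 2 ^ n) (((k i : ℝ) + 1) / 2 ^ n)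

/-!
By capacitability, `F` is first replaced by a compact subset. Parametrize `F` by a continuous map
`g` on the Baire space such that the preimages of the dyadic cubes are open; this is possible after
refining a Polish topology. For `t > s` below the dimension of `F`, the content `c` given by covers
with dyadic cubes, a cube of level `n` having weight `2 ^ (-n t)`, has the same null sets as the
`t`-dimensional Hausdorff measure. It is continuous along increasing unions, because two dyadic
cubes that meet are nested and a cover can be reduced to its maximal cubes. Hence the coordinates in
the Baire space can be bounded one after the other while `c` stays above a positive constant; the
bounds define a compact set `K`, and `c (g K) > 0` because a cover of `g K`, being open upstairs,
already covers the image of a set on which only finitely many coordinates are bounded.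

Now remove from `g K` each of the countably many cubes in which it has dimension at most `s`. By
countable stability of the dimension nothing is lost in the remaining cubes, and what is left is the
image under `g` of a compact set.
-/

/-! ### Net contents and increasing unions -/

section NetContent

variable {X ι : Type*}

/-- The content of `E` attached to a family of sets `Q i` with weights: the least total weight
`W A` of a subfamily `A` covering `E`. The weights are encoded as a measure on the index type. -/
def netContent [MeasurableSpace ι] (W : Measure ι) (Q : ι → Set X) (E : Set X) : ℝ≥0∞ :=
  ⨅ (A : Set ι) (_ : E ⊆ ⋃ i ∈ A, Q i), W A

/-- A net, as for the dyadic cubes: of two sets of the family that meet, the one of larger level is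
contained in the other, and sets of the same level meet only if they have the same index. -/
structure IsNet (lev : ι → ℕ) (Q : ι → Set X) : Prop where
  subset_of_mem : ∀ {i j x}, lev i ≤ lev j → x ∈ Q i → x ∈ Q j → Q j ⊆ Q i
  eq_of_mem : ∀ {i j x}, lev i = lev j → x ∈ Q i → x ∈ Q j → i = j

/-- The indices in `A` of the sets that are maximal in the family: no set of the family that has
smaller level contains them. Passing to them turns a cover by a net into a disjoint one. -/
def maximalIndices (lev : ι → ℕ) (Q : ι → Set X) (A : Set ι) : Set ι :=
  {i ∈ A | ∀ j ∈ A, Q i ⊆ Q j → lev i ≤ lev j}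

theorem maximalIndices_subset (lev : ι → ℕ) (Q : ι → Set X) (A : Set ι) :
    maximalIndices lev Q A ⊆ A :=
  sep_subset _ _

theorem maximalIndices_inter_subset_of_subset (lev : ι → ℕ) (Q : ι → Set X) {A D : Set ι}
    (h : D ⊆ A) : maximalIndices lev Q A ∩ D ⊆ maximalIndices lev Q D :=
  fun _ hi => ⟨hi.2, fun j hj => hi.1.2 j (h hj)⟩

theorem biUnion_subset_biUnion_maximalIndices (lev : ι → ℕ) (Q : ι → Set X) (A : Set ι) :
    (⋃ i ∈ A, Q i) ⊆ ⋃ i ∈ maximalIndices lev Q A, Q i := by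
  intro x hx
  obtain ⟨i₀, hi₀, hxi₀⟩ := mem_iUnion₂.1 hx
  obtain ⟨i, ⟨hi, hxi⟩, hmin⟩ :=
    WellFounded.has_min (measure lev).wf {i | i ∈ A ∧ x ∈ Q i} ⟨i₀, hi₀, hxi₀⟩
  exact mem_biUnion ⟨hi, fun j hj hij => not_lt.1 (hmin j ⟨hj, hij hxi⟩)⟩ hxi

variable {lev : ι → ℕ} {Q : ι → Set X}

/-- A point of `E` lies in a maximal set of `D` and in a set of `A`. Unless these coincide, the
smaller one is no longer maximal in `D ∪ A`; so the sets discarded on passing to the maximal ones,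
together with the sets counted twice, cover `E` once more. -/
theorem IsNet.subset_biUnion_discarded (hnet : IsNet lev Q) {D A : Set ι} {E : Set X}
    (hD : E ⊆ ⋃ i ∈ D, Q i) (hA : E ⊆ ⋃ i ∈ A, Q i) :
    E ⊆ ⋃ i ∈ ((maximalIndices lev Q D ∪ A) \ maximalIndices lev Q (D ∪ A)) ∪
      (maximalIndices lev Q D ∩ A), Q i := by
  intro x hx
  obtain ⟨i, hi, hxi⟩ := mem_iUnion₂.1 (biUnion_subset_biUnion_maximalIndices lev Q D (hD hx))
  obtain ⟨j, hj, hxj⟩ := mem_iUnion₂.1 (hA hx)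
  rcases lt_trichotomy (lev i) (lev j) with h | h | h
  · refine mem_biUnion (Or.inl ⟨Or.inr hj, fun hjmax => ?_⟩) hxj
    exact h.not_ge (hjmax.2 i (Or.inl hi.1) (hnet.subset_of_mem h.le hxi hxj))
  · obtain rfl := hnet.eq_of_mem h hxi hxj
    exact mem_biUnion (Or.inr ⟨hi, hj⟩) hxi
  · refine mem_biUnion (Or.inl ⟨Or.inl hi, fun himax => ?_⟩) hxi
    exact h.not_ge (himax.2 j (Or.inr hj) (hnet.subset_of_mem h.le hxj hxi))

variable [MeasurableSpace ι] {W : Measure ι}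

theorem netContent_le_of_subset {E : Set X} {A : Set ι} (h : E ⊆ ⋃ i ∈ A, Q i) :
    netContent W Q E ≤ W A :=
  iInf₂_le A h

theorem netContent_mono {E E' : Set X} (h : E ⊆ E') : netContent W Q E ≤ netContent W Q E' :=
  le_iInf₂ fun _ hA => netContent_le_of_subset (h.trans hA)

theorem exists_cover_of_netContent_lt {E : Set X} {a : ℝ≥0∞} (h : netContent W Q E < a) :
    ∃ A : Set ι, E ⊆ (⋃ i ∈ A, Q i) ∧ W A < a := by
  simpa only [netContent, iInf_lt_iff, exists_prop] using h

theorem netContent_iUnion_le (E : ℕ → Set X) :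
    netContent W Q (⋃ n, E n) ≤ ∑' n, netContent W Q (E n) := by
  refine ENNReal.le_of_forall_pos_le_add fun ε hε hfin => ?_
  obtain ⟨δ, hδpos, hδ⟩ := ENNReal.exists_pos_sum_of_countable' (ENNReal.coe_pos.2 hε).ne' ℕ
  have hcover : ∀ n, ∃ A : Set ι, E n ⊆ (⋃ i ∈ A, Q i) ∧ W A < netContent W Q (E n) + δ n :=
    fun n => exists_cover_of_netContent_lt <|
      ENNReal.lt_add_right (ENNReal.ne_top_of_tsum_ne_top hfin.ne n) (hδpos n).ne'
  choose A hEA hWA using hcover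
  have hcov : (⋃ n, E n) ⊆ ⋃ i ∈ ⋃ n, A n, Q i := by
    rw [biUnion_iUnion]
    exact iUnion_mono hEA
  calc netContent W Q (⋃ n, E n)
      ≤ W (⋃ n, A n) := netContent_le_of_subset hcov
    _ ≤ ∑' n, W (A n) := measure_iUnion_le _
    _ ≤ ∑' n, (netContent W Q (E n) + δ n) := ENNReal.tsum_le_tsum fun n => (hWA n).le
    _ = ∑' n, netContent W Q (E n) + ∑' n, δ n := ENNReal.tsum_add
    _ ≤ ∑' n, netContent W Q (E n) + ε := by gcongr

theorem measure_maximalIndices_iUnion_le {D : ℕ → Set ι} (hD : Monotone D) {b : ℝ≥0∞}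
    (h : ∀ n, W (maximalIndices lev Q (D n)) ≤ b) : W (maximalIndices lev Q (⋃ n, D n)) ≤ b := by
  set M := maximalIndices lev Q (⋃ n, D n)
  have hM : M = ⋃ n, M ∩ D n := by
    rw [← inter_iUnion, inter_eq_left.2 (maximalIndices_subset lev Q _)]
  rw [hM, Monotone.measure_iUnion fun m n hmn => inter_subset_inter_right M (hD hmn)]
  exact iSup_le fun n => (measure_mono
    (maximalIndices_inter_subset_of_subset lev Q (subset_iUnion D n))).trans (h n)

variable [DiscreteMeasurableSpace ι]

theorem IsNet.measure_maximalIndices_union_add_netContent_le (hnet : IsNet lev Q)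
    {D A : Set ι} {E : Set X} (hD : E ⊆ ⋃ i ∈ D, Q i) (hA : E ⊆ ⋃ i ∈ A, Q i) :
    W (maximalIndices lev Q (D ∪ A)) + netContent W Q E ≤ W (maximalIndices lev Q D) + W A := by
  have hcov := hnet.subset_biUnion_discarded hD hA
  set M := maximalIndices lev Q (D ∪ A)
  set C := maximalIndices lev Q D
  have hsub : M ⊆ C ∪ A := by
    rintro i ⟨hi | hi, hmax⟩
    · exact Or.inl ⟨hi, fun j hj => hmax j (Or.inl hj)⟩
    · exact Or.inr hi
  calc W M + netContent W Q E
      ≤ W M + (W ((C ∪ A) \ M) + W (C ∩ A)) := by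
        gcongr
        exact (netContent_le_of_subset hcov).trans (measure_union_le _ _)
    _ = W (C ∪ A) + W (C ∩ A) := by
        rw [← add_assoc, measure_add_sdiff MeasurableSet.of_discrete.nullMeasurableSet,
          union_eq_self_of_subset_left hsub]
    _ = W C + W A := measure_union_add_inter _ .of_discrete

theorem IsNet.measure_maximalIndices_accumulate_le (hnet : IsNet lev Q) {E : ℕ → Set X}
    (hE : Monotone E) (hfin : ∀ n, netContent W Q (E n) ≠ ∞) {A : ℕ → Set ι}
    (hcov : ∀ n, E n ⊆ ⋃ i ∈ A n, Q i) {δ : ℕ → ℝ≥0∞}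
    (hW : ∀ n, W (A n) ≤ netContent W Q (E n) + δ n) (n : ℕ) :
    W (maximalIndices lev Q (accumulate A n)) ≤
      netContent W Q (E n) + ∑ m ∈ Finset.range (n + 1), δ m := by
  induction n with
  | zero =>
    simpa using (measure_mono (maximalIndices_subset lev Q (A 0))).trans (hW 0)
  | succ n ih =>
    have hacc : E n ⊆ ⋃ i ∈ accumulate A n, Q i :=
      (hcov n).trans (biUnion_subset_biUnion_left subset_accumulate)
    have hnext : E n ⊆ ⋃ i ∈ A (n + 1), Q i := (hE n.le_succ).trans (hcov (n + 1))
    rw [← ENNReal.add_le_add_iff_right (hfin n), accumulate_succ]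
    calc W (maximalIndices lev Q (accumulate A n ∪ A (n + 1))) + netContent W Q (E n)
        ≤ W (maximalIndices lev Q (accumulate A n)) + W (A (n + 1)) :=
          hnet.measure_maximalIndices_union_add_netContent_le hacc hnext
      _ ≤ (netContent W Q (E n) + ∑ m ∈ Finset.range (n + 1), δ m) +
            (netContent W Q (E (n + 1)) + δ (n + 1)) := add_le_add ih (hW (n + 1))
      _ = netContent W Q (E (n + 1)) + ∑ m ∈ Finset.range (n + 2), δ m +
            netContent W Q (E n) := by rw [Finset.sum_range_succ _ (n + 1)]; ring

theorem IsNet.netContent_iUnion_of_monotone (hnet : IsNet lev Q) {E : ℕ → Set X}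
    (hE : Monotone E) : netContent W Q (⋃ n, E n) = ⨆ n, netContent W Q (E n) := by
  refine le_antisymm ?_ (iSup_le fun n => netContent_mono (subset_iUnion E n))
  refine ENNReal.le_of_forall_pos_le_add fun ε hε hsup => ?_
  have hfin : ∀ n, netContent W Q (E n) ≠ ∞ := fun n => ((le_iSup _ n).trans_lt hsup).ne
  obtain ⟨δ, hδpos, hδ⟩ := ENNReal.exists_pos_sum_of_countable' (ENNReal.coe_pos.2 hε).ne' ℕ
  have hcover : ∀ n, ∃ A : Set ι, E n ⊆ (⋃ i ∈ A, Q i) ∧ W A < netContent W Q (E n) + δ n :=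
    fun n => exists_cover_of_netContent_lt (ENNReal.lt_add_right (hfin n) (hδpos n).ne')
  choose A hEA hWA using hcover
  have hcov : (⋃ n, E n) ⊆ ⋃ i ∈ maximalIndices lev Q (⋃ n, accumulate A n), Q i := by
    refine Subset.trans ?_ (biUnion_subset_biUnion_maximalIndices lev Q _)
    rw [iUnion_accumulate, biUnion_iUnion]
    exact iUnion_mono hEA
  refine (netContent_le_of_subset hcov).trans
    (measure_maximalIndices_iUnion_le monotone_accumulate fun n => ?_)
  calc W (maximalIndices lev Q (accumulate A n))
      ≤ netContent W Q (E n) + ∑ m ∈ Finset.range (n + 1), δ m :=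
        hnet.measure_maximalIndices_accumulate_le hE hfin hEA (fun n => (hWA n).le) n
    _ ≤ (⨆ n, netContent W Q (E n)) + ε :=
        add_le_add (le_iSup (fun n => netContent W Q (E n)) n)
          ((ENNReal.sum_le_tsum _).trans hδ.le)

end NetContent

/-! ### Capacitability over the Baire space -/

section Capacitability

theorem exists_pi_Iio_subset_of_isOpen {E : ℕ → Type*} [∀ n, TopologicalSpace (E n)]
    [∀ n, DiscreteTopology (E n)] {s : ∀ n, Set (E n)} (hs : ∀ n, IsCompact (s n))
    {V : Set (∀ n, E n)} (hV : IsOpen V) (hsV : univ.pi s ⊆ V) : ∃ n, (Iio n).pi s ⊆ V := by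
  rcases (univ.pi s).eq_empty_or_nonempty with hempty | ⟨c, hc⟩
  · obtain ⟨j, hj⟩ := univ_pi_eq_empty_iff.1 hempty
    exact ⟨j + 1, (pi_eq_empty (mem_Iio.2 j.lt_succ_self) hj).trans_subset (empty_subset V)⟩
  have hopen : ∀ n, IsOpen {y | PiNat.cylinder y n ⊆ V} := fun n =>
    isOpen_iff_mem_nhds.2 fun y hy => by
      filter_upwards [(PiNat.isOpen_cylinder E y n).mem_nhds (PiNat.self_mem_cylinder y n)]
        with z hz
      exact (PiNat.mem_cylinder_iff_eq.1 hz).trans_subset hy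
  have hcover : univ.pi s ⊆ ⋃ n, {y | PiNat.cylinder y n ⊆ V} := fun y hy => by
    obtain ⟨_, ⟨x, n, rfl⟩, hyx, hxV⟩ :=
      (PiNat.isTopologicalBasis_cylinders E).exists_subset_of_mem_open (hsV hy) hV
    exact mem_iUnion.2 ⟨n, (PiNat.mem_cylinder_iff_eq.1 hyx).trans_subset hxV⟩
  have hdir : Directed (· ⊆ ·) fun n => {y | PiNat.cylinder y n ⊆ V} :=
    Monotone.directed_le fun m n hmn y hy => (PiNat.cylinder_anti y hmn).trans hy
  obtain ⟨n, hn⟩ := (isCompact_univ_pi hs).elim_directed_cover _ hopen hcover hdir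
  classical
  refine ⟨n, fun z hz => ?_⟩
  have hmem : (Iio n).piecewise z c ∈ univ.pi s := fun j _ => by
    by_cases hj : j ∈ Iio n
    · simpa [hj] using hz j hj
    · simpa [hj] using hc j trivial
  exact hn hmem fun j hj => ((Iio n).piecewise_eq_of_mem z c hj).symm

/-- The bounds `N j` are chosen one after the other: raising the bound on one coordinate exhausts
the set, so by continuity from below a large enough bound keeps `c` above `a`. -/
theorem exists_forall_lt_apply_pi_Iio_Iic {α : Type*} [CompleteLinearOrder α]
    {c : Set (ℕ → ℕ) → α} (hc : ∀ E : ℕ → Set (ℕ → ℕ), Monotone E → c (⋃ n, E n) = ⨆ n, c (E n))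
    {a : α} (ha : a < c univ) :
    ∃ N : ℕ → ℕ, ∀ n, a < c ((Iio n).pi fun j => Iic (N j)) := by
  have hstep : ∀ (n : ℕ) (S : {S // a < c S}), ∃ m : ℕ, a < c (S.1 ∩ {z | z n ≤ m}) := by
    rintro n ⟨S, hS⟩
    have hexhaust : S = ⋃ m : ℕ, S ∩ {z | z n ≤ m} := by
      rw [← inter_iUnion, eq_comm, inter_eq_left]
      exact fun z _ => mem_iUnion.2 ⟨z n, le_refl (z n)⟩
    have hmono : Monotone fun m : ℕ => S ∩ {z | z n ≤ m} := fun m m' hmm =>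
      inter_subset_inter_right S fun z (hz : z n ≤ m) => hz.trans hmm
    rw [hexhaust, hc _ hmono] at hS
    exact lt_iSup_iff.1 hS
  choose m hm using hstep
  let S : ℕ → {S // a < c S} := fun n => n.rec ⟨univ, ha⟩ fun n T => ⟨_, hm n T⟩
  have hS : ∀ n, (S n).1 = (Iio n).pi fun j => Iic (m j (S j)) := fun n => by
    induction n with
    | zero => simp [S]
    | succ n ih =>
      rw [← Order.succ_eq_add_one, Order.Iio_succ_eq_insert, insert_pi, ← ih, inter_comm]
      rfl
  exact ⟨fun j => m j (S j), fun n => hS n ▸ (S n).2⟩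

variable {X ι : Type*} [MeasurableSpace ι] [DiscreteMeasurableSpace ι] {W : Measure ι}
  {lev : ι → ℕ} {Q : ι → Set X}

theorem IsNet.exists_isCompact_le_netContent_image (hnet : IsNet lev Q) {g : (ℕ → ℕ) → X}
    (hg : ∀ i, IsOpen (g ⁻¹' Q i)) {a : ℝ≥0∞} (ha : a < netContent W Q (range g)) :
    ∃ K : Set (ℕ → ℕ), IsCompact K ∧ a ≤ netContent W Q (g '' K) := by
  obtain ⟨N, hN⟩ := exists_forall_lt_apply_pi_Iio_Iic (c := fun S => netContent W Q (g '' S))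
    (fun E hE => by
      rw [image_iUnion, hnet.netContent_iUnion_of_monotone fun m n hmn => image_mono (hE hmn)])
    (by rwa [image_univ])
  have hcompact : ∀ j, IsCompact (Iic (N j)) := fun j => (finite_Iic (N j)).isCompact
  refine ⟨univ.pi fun j => Iic (N j), isCompact_univ_pi hcompact, le_iInf₂ fun A hA => ?_⟩
  have hopen : IsOpen (g ⁻¹' ⋃ i ∈ A, Q i) := by
    rw [preimage_iUnion₂]
    exact isOpen_biUnion fun i _ => hg i
  obtain ⟨n, hn⟩ := exists_pi_Iio_subset_of_isOpen hcompact hopen (image_subset_iff.1 hA)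
  exact (hN n).le.trans (netContent_le_of_subset (image_subset_iff.2 hn))

end Capacitability

/-! ### Comparison with the Hausdorff measure -/

section Comparison

theorem tendsto_pow_rpow_atTop_nhds_zero {x : ℝ≥0∞} (hx : x < 1) {t : ℝ} (ht : 0 < t) :
    Tendsto (fun n : ℕ => (x ^ n) ^ t) atTop (nhds 0) := by
  simpa only [ENNReal.zero_rpow_of_pos ht] using
    (ENNReal.tendsto_pow_atTop_nhds_zero_of_lt_one hx).ennrpow_const t

theorem exists_le_two_inv_pow_le_two_mul {D : ℝ≥0∞} (hD : D ≠ 0) (hD1 : D ≤ 1) :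
    ∃ n : ℕ, D ≤ 2⁻¹ ^ n ∧ 2⁻¹ ^ n ≤ 2 * D := by
  lift D to NNReal using (hD1.trans_lt one_lt_top).ne
  obtain ⟨n, hlt, hle⟩ := exists_nat_pow_near_of_lt_one (y := (2⁻¹ : NNReal))
    (pos_iff_ne_zero.2 (ENNReal.coe_ne_zero.1 hD)) (ENNReal.coe_le_one_iff.1 hD1)
    (by positivity) (by norm_num)
  have htwice : (2⁻¹ : NNReal) ^ n ≤ 2 * D :=
    calc (2⁻¹ : NNReal) ^ n = 2 * 2⁻¹ ^ (n + 1) := by rw [pow_succ']; simp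
      _ ≤ 2 * D := by gcongr
  rw [← ENNReal.coe_two, ← ENNReal.coe_inv two_ne_zero]
  exact ⟨n, mod_cast hle, mod_cast htwice⟩

theorem exists_cover_tsum_ediam_rpow_lt {X : Type*} [EMetricSpace X] [MeasurableSpace X]
    [BorelSpace X] {t : ℝ} (ht : 0 < t) {E : Set X} {ε : ℝ≥0∞} (h : μH[t] E < ε) {δ : ℝ≥0∞}
    (hδ : 0 < δ) :
    ∃ T : ℕ → Set X, E ⊆ (⋃ n, T n) ∧ (∀ n, ediam (T n) ≤ δ) ∧ ∑' n, ediam (T n) ^ t < ε := by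
  rw [Measure.hausdorffMeasure_apply] at h
  have hδcover := (le_iSup₂ (f := fun (r : ℝ≥0∞) (_ : 0 < r) =>
    ⨅ (T : ℕ → Set X) (_ : E ⊆ ⋃ n, T n) (_ : ∀ n, ediam (T n) ≤ r),
      ∑' n, ⨆ _ : (T n).Nonempty, ediam (T n) ^ t) δ hδ).trans_lt h
  simp only [iInf_lt_iff] at hδcover
  obtain ⟨T, hET, hTδ, hsum⟩ := hδcover
  refine ⟨T, hET, hTδ, lt_of_eq_of_lt (tsum_congr fun n => ?_) hsum⟩
  rcases (T n).eq_empty_or_nonempty with hempty | hne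
  · simp [hempty, ht]
  · simp [hne]

variable {X ι : Type*} [EMetricSpace X] {lev : ι → ℕ} {Q : ι → Set X} {N : ℕ} {t : ℝ}

/-- A net whose sets of level `n` have diameter at most `2 ^ (-n)`, and such that every set of
diameter at most `2 ^ (-n)` is covered by `N` of them. -/
structure IsDyadicNet (lev : ι → ℕ) (Q : ι → Set X) (N : ℕ) : Prop extends IsNet lev Q where
  ediam_le : ∀ i, ediam (Q i) ≤ 2⁻¹ ^ lev i
  exists_cover : ∀ {n : ℕ} {S : Set X}, ediam S ≤ 2⁻¹ ^ n →
    ∃ A : Finset ι, A.card ≤ N ∧ (∀ i ∈ A, lev i = n) ∧ S ⊆ ⋃ i ∈ A, Q i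

variable [MeasurableSpace ι]

/-- The weights `2 ^ (-n t)` of the sets of level `n`, as a measure on the index type. -/
def dyadicWeight (lev : ι → ℕ) (t : ℝ) : Measure ι :=
  Measure.sum fun i => (((2 : ℝ≥0∞)⁻¹ ^ lev i) ^ t) • Measure.dirac i

variable [DiscreteMeasurableSpace ι]

theorem dyadicWeight_apply (lev : ι → ℕ) (t : ℝ) (A : Set ι) :
    dyadicWeight lev t A = ∑' i : A, ((2 : ℝ≥0∞)⁻¹ ^ lev i) ^ t := by
  rw [dyadicWeight, Measure.sum_apply _ .of_discrete,
    tsum_subtype A fun i => ((2 : ℝ≥0∞)⁻¹ ^ lev i) ^ t]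
  refine tsum_congr fun i => ?_
  by_cases hi : i ∈ A <;> simp [hi]

namespace IsDyadicNet

theorem netContent_le_mul_pow_rpow (hnet : IsDyadicNet lev Q N) (t : ℝ) {n : ℕ} {S : Set X}
    (hS : ediam S ≤ 2⁻¹ ^ n) :
    netContent (dyadicWeight lev t) Q S ≤ N * (2⁻¹ ^ n) ^ t := by
  obtain ⟨A, hcard, hlev, hcov⟩ := hnet.exists_cover hS
  calc netContent (dyadicWeight lev t) Q S
      ≤ dyadicWeight lev t (A : Set ι) := netContent_le_of_subset hcov
    _ = ∑' i : (A : Set ι), (2⁻¹ ^ lev i) ^ t := dyadicWeight_apply lev t A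
    _ = ∑ i ∈ A, ((2 : ℝ≥0∞)⁻¹ ^ lev i) ^ t :=
        A.tsum_subtype fun i => ((2 : ℝ≥0∞)⁻¹ ^ lev i) ^ t
    _ = A.card * (2⁻¹ ^ n) ^ t := by
        rw [Finset.sum_congr rfl fun i hi => by rw [hlev i hi], Finset.sum_const, nsmul_eq_mul]
    _ ≤ N * (2⁻¹ ^ n) ^ t := by gcongr

theorem netContent_le_mul_ediam_rpow (hnet : IsDyadicNet lev Q N) (ht : 0 < t) {S : Set X}
    (hS : ediam S ≤ 1) :
    netContent (dyadicWeight lev t) Q S ≤ N * 2 ^ t * ediam S ^ t := by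
  rcases eq_or_ne (ediam S) 0 with hzero | hpos
  · have hlim : Tendsto (fun n : ℕ => (N : ℝ≥0∞) * ((2 : ℝ≥0∞)⁻¹ ^ n) ^ t) atTop (nhds 0) := by
      simpa only [mul_zero] using ENNReal.Tendsto.const_mul
        (tendsto_pow_rpow_atTop_nhds_zero (by simp) ht) (Or.inr (natCast_ne_top N))
    exact (ge_of_tendsto' hlim fun n =>
      hnet.netContent_le_mul_pow_rpow t (hzero.trans_le zero_le)).trans zero_le
  · obtain ⟨n, hle, htwice⟩ := exists_le_two_inv_pow_le_two_mul hpos hS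
    calc netContent (dyadicWeight lev t) Q S
        ≤ N * (2⁻¹ ^ n) ^ t := hnet.netContent_le_mul_pow_rpow t hle
      _ ≤ N * (2 * ediam S) ^ t := by gcongr
      _ = N * 2 ^ t * ediam S ^ t := by rw [ENNReal.mul_rpow_of_nonneg _ _ ht.le, mul_assoc]

variable [MeasurableSpace X] [BorelSpace X]

theorem netContent_eq_zero_of_hausdorffMeasure_eq_zero (hnet : IsDyadicNet lev Q N) (ht : 0 < t)
    {E : Set X} (h : μH[t] E = 0) : netContent (dyadicWeight lev t) Q E = 0 := by
  by_contra hne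
  have hconst : (N : ℝ≥0∞) * 2 ^ t ≠ ∞ :=
    ENNReal.mul_ne_top (natCast_ne_top N) (ENNReal.rpow_ne_top_of_nonneg ht.le (by simp))
  obtain ⟨ε, hε, hlt⟩ := ENNReal.exists_nnreal_pos_mul_lt hconst hne
  obtain ⟨T, hET, hT, hsum⟩ :=
    exists_cover_tsum_ediam_rpow_lt ht (h.trans_lt (ENNReal.coe_pos.2 hε)) one_pos
  refine hlt.not_ge ?_
  calc netContent (dyadicWeight lev t) Q E
      ≤ netContent (dyadicWeight lev t) Q (⋃ n, T n) := netContent_mono hET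
    _ ≤ ∑' n, netContent (dyadicWeight lev t) Q (T n) := netContent_iUnion_le T
    _ ≤ ∑' n, N * 2 ^ t * ediam (T n) ^ t :=
        ENNReal.tsum_le_tsum fun n => hnet.netContent_le_mul_ediam_rpow ht (hT n)
    _ = (∑' n, ediam (T n) ^ t) * (N * 2 ^ t) := by rw [ENNReal.tsum_mul_left, mul_comm]
    _ ≤ ε * (N * 2 ^ t) := by gcongr

/-- A subfamily of total weight less than `2 ^ (-n t)` has no sets of level below `n`, so covers of
small weight automatically consist of small sets. -/
theorem hausdorffMeasure_eq_zero_of_netContent_eq_zero [Countable ι] (hnet : IsDyadicNet lev Q N)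
    (ht : 0 < t) {E : Set X} (h : netContent (dyadicWeight lev t) Q E = 0) : μH[t] E = 0 := by
  have hpos : ∀ n : ℕ, 0 < ((2 : ℝ≥0∞)⁻¹ ^ n) ^ t := fun n =>
    ENNReal.rpow_pos (ENNReal.pow_pos (by simp) n) (by simp)
  choose A hcov hweight using fun n => exists_cover_of_netContent_lt (h.trans_lt (hpos n))
  have hsum : ∀ n, ∑' i : A n, ediam (Q i) ^ t ≤ ((2 : ℝ≥0∞)⁻¹ ^ n) ^ t := fun n =>
    calc ∑' i : A n, ediam (Q i) ^ t
        ≤ ∑' i : A n, (2⁻¹ ^ lev i) ^ t :=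
          ENNReal.tsum_le_tsum fun i => ENNReal.rpow_le_rpow (hnet.ediam_le i) ht.le
      _ = dyadicWeight lev t (A n) := (dyadicWeight_apply lev t (A n)).symm
      _ ≤ (2⁻¹ ^ n) ^ t := (hweight n).le
  have hsmall : ∀ n (i : A n), ediam (Q i) ≤ 2⁻¹ ^ n := fun n i =>
    (ENNReal.rpow_le_rpow_iff ht).1 ((ENNReal.le_tsum i).trans (hsum n))
  have hle := Measure.hausdorffMeasure_le_liminf_tsum t E (fun n : ℕ => (2 : ℝ≥0∞)⁻¹ ^ n)
    (ENNReal.tendsto_pow_atTop_nhds_zero_of_lt_one (by simp)) (fun n (i : A n) => Q i)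
    (.of_forall hsmall) (.of_forall fun n => by simpa only [iUnion_coe_set] using hcov n)
  have hlim : Tendsto (fun n => ∑' i : A n, ediam (Q i) ^ t) atTop (nhds 0) :=
    tendsto_of_tendsto_of_tendsto_of_le_of_le tendsto_const_nhds
      (tendsto_pow_rpow_atTop_nhds_zero (by simp) ht) (fun _ => zero_le) hsum
  rwa [hlim.liminf_eq, nonpos_iff_eq_zero] at hle

end IsDyadicNet

end Comparison

/-! ### Dyadic cubes of the torus -/

section Torus

/-- The index modulo `M` of the arc `[k / M, (k + 1) / M)` of the circle that contains a given
point. Taking indices in `ZMod M` makes the definition independent of the representative. -/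
def arcIndex (M : ℕ) : AddCircle (1 : ℝ) → ZMod M :=
  Function.Periodic.lift (f := fun a : ℝ => ((⌊M * a⌋ : ℤ) : ZMod M)) fun a => by
    simp [mul_add]

theorem arcIndex_coe (M : ℕ) (a : ℝ) : arcIndex M (a : AddCircle (1 : ℝ)) = (⌊M * a⌋ : ℤ) :=
  Function.Periodic.lift_coe _ a

theorem measurable_arcIndex (M : ℕ) : Measurable (arcIndex M) := by
  have hfloor : Measurable fun a : ℝ => ((⌊M * a⌋ : ℤ) : ZMod M) :=
    measurable_from_top.comp (Int.measurable_floor.comp (measurable_const_mul _))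
  exact QuotientAddGroup.measurable_from_quotient.2 hfloor

theorem floor_mul_eq_natCast_iff {M : ℕ} [NeZero M] {a : ℝ} {k : ℕ} :
    ⌊M * a⌋ = (k : ℤ) ↔ a ∈ Ico ((k : ℝ) / M) (((k : ℝ) + 1) / M) := by
  have hM : (0 : ℝ) < M := Nat.cast_pos.2 (NeZero.pos M)
  rw [Int.floor_eq_iff, mem_Ico, div_le_iff₀' hM, lt_div_iff₀' hM, Int.cast_natCast]

theorem arcIndex_eq_natCast_iff {M : ℕ} [NeZero M] {x : AddCircle (1 : ℝ)} {k : ℕ} :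
    arcIndex M x = k ↔
      x ∈ ((↑·) : ℝ → AddCircle (1 : ℝ)) '' Ico ((k : ℝ) / M) (((k : ℝ) + 1) / M) := by
  constructor
  · obtain ⟨a, rfl⟩ := QuotientAddGroup.mk_surjective x
    intro h
    rw [arcIndex_coe, ← Int.cast_natCast k, eq_comm, ZMod.intCast_eq_intCast_iff_dvd_sub] at h
    obtain ⟨z, hz⟩ := h
    refine ⟨a - z, floor_mul_eq_natCast_iff.1 ?_, by simp⟩
    have hshift : (M : ℝ) * (a - z) = M * a - ((M * z : ℤ) : ℝ) := by push_cast; ring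
    rw [hshift, Int.floor_sub_intCast, ← hz, _root_.sub_sub_cancel]
  · rintro ⟨a, ha, rfl⟩
    simp [arcIndex_coe, floor_mul_eq_natCast_iff.2 ha]

theorem arcIndex_eq_of_dvd {M M' : ℕ} [NeZero M'] (hdvd : M ∣ M') {x y : AddCircle (1 : ℝ)}
    (h : arcIndex M' x = arcIndex M' y) : arcIndex M x = arcIndex M y := by
  obtain ⟨q, rfl⟩ := hdvd
  obtain ⟨a, rfl⟩ := QuotientAddGroup.mk_surjective x
  obtain ⟨b, rfl⟩ := QuotientAddGroup.mk_surjective y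
  have hq : 0 < q := Nat.pos_of_ne_zero (right_ne_zero_of_mul (NeZero.ne (M * q)))
  have hfloor : ∀ c : ℝ, ⌊((M * q : ℕ) : ℝ) * c⌋ / q = ⌊M * c⌋ := fun c => by
    rw [← Int.cast_mul_floor_div_cancel_of_pos (Int.natCast_pos.2 hq) ((M : ℝ) * c)]
    push_cast
    ring_nf
  simp only [arcIndex_coe, ZMod.intCast_eq_intCast_iff_dvd_sub] at h ⊢
  obtain ⟨z, hz⟩ := h
  have hcast : ((M * q : ℕ) : ℤ) * z = M * z * q := by push_cast; ring
  refine ⟨z, sub_eq_of_eq_add' ?_⟩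
  rw [← hfloor b, eq_add_of_sub_eq' hz, hcast,
    Int.add_mul_ediv_right _ _ (Int.natCast_pos.2 hq).ne', hfloor a]

theorem exists_coe_eq_abs_sub_eq_dist {p : ℝ} (x y : AddCircle p) :
    ∃ a b : ℝ, (a : AddCircle p) = x ∧ (b : AddCircle p) = y ∧ |a - b| = dist x y := by
  obtain ⟨a, rfl⟩ := QuotientAddGroup.mk_surjective x
  obtain ⟨b, rfl⟩ := QuotientAddGroup.mk_surjective y
  refine ⟨a - round (p⁻¹ * (a - b)) * p, b, by simp [AddCircle.coe_period], rfl, ?_⟩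
  rw [dist_eq_norm, ← QuotientAddGroup.mk_sub, AddCircle.norm_eq, sub_right_comm]

theorem dist_le_of_arcIndex_eq {M : ℕ} [NeZero M] {x y : AddCircle (1 : ℝ)}
    (h : arcIndex M x = arcIndex M y) : dist x y ≤ (M : ℝ)⁻¹ := by
  rw [← ZMod.natCast_zmod_val (arcIndex M y)] at h
  obtain ⟨a, ha, rfl⟩ := arcIndex_eq_natCast_iff.1 h
  obtain ⟨b, hb, rfl⟩ := arcIndex_eq_natCast_iff.1 (ZMod.natCast_zmod_val (arcIndex M y)).symm
  calc dist (a : AddCircle (1 : ℝ)) b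
      = ‖((a - b : ℝ) : AddCircle (1 : ℝ))‖ := by rw [dist_eq_norm, AddCircle.coe_sub]
    _ ≤ ‖a - b‖ := QuotientAddGroup.norm_mk_le_norm
    _ ≤ (M : ℝ)⁻¹ := by
        rw [add_div, one_div] at ha hb
        exact abs_sub_le_iff.2 ⟨by linarith [ha.2, hb.1], by linarith [ha.1, hb.2]⟩

theorem arcIndex_sub_mem_of_dist_le {M : ℕ} {x y : AddCircle (1 : ℝ)}
    (h : dist x y ≤ (M : ℝ)⁻¹) : arcIndex M x - arcIndex M y ∈ ({-1, 0, 1} : Finset (ZMod M)) := by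
  obtain ⟨a, b, rfl, rfl, hab⟩ := exists_coe_eq_abs_sub_eq_dist x y
  have hdist : |M * a - M * b| ≤ 1 :=
    calc |M * a - M * b| = M * |a - b| := by rw [← mul_sub, abs_mul, Nat.abs_cast]
      _ ≤ M * (M : ℝ)⁻¹ := by gcongr; exact hab.trans_le h
      _ ≤ 1 := mul_inv_le_one
  obtain ⟨hupper, hlower⟩ := abs_sub_le_iff.1 hdist
  have hfloor : ∀ u v : ℝ, u - v ≤ 1 → ⌊u⌋ ≤ ⌊v⌋ + 1 := fun u v huv =>
    (Int.floor_mono (sub_le_iff_le_add'.1 huv)).trans_eq (Int.floor_add_one v)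
  have hcases : ⌊M * a⌋ - ⌊M * b⌋ = -1 ∨ ⌊M * a⌋ - ⌊M * b⌋ = 0 ∨ ⌊M * a⌋ - ⌊M * b⌋ = 1 := by
    have hle := hfloor _ _ hupper
    have hge := hfloor _ _ hlower
    lia
  rw [arcIndex_coe, arcIndex_coe, ← Int.cast_sub]
  rcases hcases with h | h | h <;> simp [h]

variable {d n : ℕ}

theorem mem_dyadicCube_iff {k : Fin d → Fin (2 ^ n)} {x : Fin d → AddCircle (1 : ℝ)} :
    x ∈ dyadicCube d n k ↔ ∀ i, arcIndex (2 ^ n) (x i) = (k i : ℕ) := by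
  simp only [dyadicCube, mem_univ_pi, arcIndex_eq_natCast_iff, Nat.cast_pow, Nat.cast_ofNat]

theorem measurableSet_dyadicCube (d n : ℕ) (k : Fin d → Fin (2 ^ n)) :
    MeasurableSet (dyadicCube d n k) := by
  have hcube : dyadicCube d n k =
      ⋂ i, (fun x => arcIndex (2 ^ n) (x i)) ⁻¹' {((k i : ℕ) : ZMod (2 ^ n))} := by
    ext x
    simp [mem_dyadicCube_iff]
  rw [hcube]
  exact .iInter fun i =>
    (measurable_arcIndex _).comp (measurable_pi_apply i) (measurableSet_singleton _)

theorem edist_le_two_inv_pow_iff {α : Type*} [PseudoMetricSpace α] {a b : α} {n : ℕ} :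
    edist a b ≤ 2⁻¹ ^ n ↔ dist a b ≤ 2⁻¹ ^ n := by
  have hcoe : (2⁻¹ : ℝ≥0∞) ^ n = ENNReal.ofReal (2⁻¹ ^ n) := by
    rw [ENNReal.ofReal_pow (by norm_num), ENNReal.ofReal_inv_of_pos two_pos, ENNReal.ofReal_ofNat]
  rw [edist_dist, hcoe, ENNReal.ofReal_le_ofReal_iff (by positivity)]

theorem ediam_dyadicCube_le (d n : ℕ) (k : Fin d → Fin (2 ^ n)) :
    ediam (dyadicCube d n k) ≤ 2⁻¹ ^ n := by
  refine ediam_le fun x hx y hy => edist_pi_le_iff.2 fun i => ?_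
  have hdist : dist (x i) (y i) ≤ 2⁻¹ ^ n := by
    simpa using dist_le_of_arcIndex_eq
      ((mem_dyadicCube_iff.1 hx i).trans (mem_dyadicCube_iff.1 hy i).symm)
  rwa [edist_le_two_inv_pow_iff]

theorem isNet_dyadicCube (d : ℕ) :
    IsNet (ι := Σ n, Fin d → Fin (2 ^ n)) Sigma.fst fun i => dyadicCube d i.1 i.2 where
  subset_of_mem := by
    rintro ⟨m, k⟩ ⟨n, l⟩ x (hmn : m ≤ n) hxk hxl y hy
    simp only [mem_dyadicCube_iff] at hxk hxl hy ⊢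
    exact fun i =>
      (arcIndex_eq_of_dvd (pow_dvd_pow 2 hmn) ((hy i).trans (hxl i).symm)).trans (hxk i)
  eq_of_mem := by
    rintro ⟨m, k⟩ ⟨n, l⟩ x (rfl : m = n) hxk hxl
    simp only [mem_dyadicCube_iff] at hxk hxl
    congr
    ext i
    rw [← ZMod.val_cast_of_lt (k i).is_lt, ← ZMod.val_cast_of_lt (l i).is_lt, ← hxk i, hxl i]

/-- Each coordinate of a point near `x` lies in the arc of that coordinate of `x` or in one of the
two neighbouring arcs. -/
theorem exists_dyadicCube_cover {S : Set (Fin d → AddCircle (1 : ℝ))} (hS : ediam S ≤ 2⁻¹ ^ n) :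
    ∃ A : Finset (Fin d → Fin (2 ^ n)), A.card ≤ 3 ^ d ∧ S ⊆ ⋃ k ∈ A, dyadicCube d n k := by
  rcases S.eq_empty_or_nonempty with rfl | ⟨x, hx⟩
  · exact ⟨∅, by simp⟩
  let shifts : Finset (Fin d → ZMod (2 ^ n)) := Fintype.piFinset fun _ => {-1, 0, 1}
  let cube (e : Fin d → ZMod (2 ^ n)) (i : Fin d) : Fin (2 ^ n) :=
    ⟨(e i + arcIndex (2 ^ n) (x i)).val, ZMod.val_lt _⟩
  refine ⟨shifts.image cube, Finset.card_image_le.trans ?_, fun y hy => ?_⟩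
  · calc shifts.card = ({-1, 0, 1} : Finset (ZMod (2 ^ n))).card ^ d :=
          Fintype.card_piFinset_const _ d
      _ ≤ 3 ^ d := Nat.pow_le_pow_left Finset.card_le_three d
  · have hdist : ∀ i, dist (y i) (x i) ≤ ((2 ^ n : ℕ) : ℝ)⁻¹ := fun i => by
      simpa using edist_le_two_inv_pow_iff.1
        ((edist_le_pi_edist y x i).trans ((edist_le_ediam_of_mem hy hx).trans hS))
    have hshift : (fun i => arcIndex (2 ^ n) (y i) - arcIndex (2 ^ n) (x i)) ∈ shifts :=
      Fintype.mem_piFinset.2 fun i => arcIndex_sub_mem_of_dist_le (hdist i)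
    refine mem_biUnion (Finset.mem_image_of_mem cube hshift) (mem_dyadicCube_iff.2 fun i => ?_)
    simp [cube]

theorem isDyadicNet_dyadicCube (d : ℕ) :
    IsDyadicNet (ι := Σ n, Fin d → Fin (2 ^ n)) Sigma.fst (fun i => dyadicCube d i.1 i.2)
      (3 ^ d) where
  toIsNet := isNet_dyadicCube d
  ediam_le i := ediam_dyadicCube_le d i.1 i.2
  exists_cover {n} S hS := by
    obtain ⟨A, hcard, hcov⟩ := exists_dyadicCube_cover hS
    refine ⟨A.map (.sigmaMk n), by rwa [Finset.card_map], ?_, ?_⟩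
    · simp
    · simpa using hcov

end Torus

/-! ### Sets of uniformly large dimension -/

section UniformDimension

variable {X ι κ : Type*}

/-- The Polish topology is refined so that the sets `s j` become open, and the refined space is
parametrized by the Baire space. -/
theorem exists_continuous_surjective_isOpen_preimage {Y : Type*} [TopologicalSpace Y]
    [PolishSpace Y] [MeasurableSpace Y] [BorelSpace Y] [Nonempty Y] [Countable κ] {s : κ → Set Y}
    (hs : ∀ j, MeasurableSet (s j)) :
    ∃ p : (ℕ → ℕ) → Y, Continuous p ∧ p.Surjective ∧ ∀ j, IsOpen (p ⁻¹' s j) := by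
  choose τ hτle hτpolish _ hτopen using fun j => (hs j).isClopenable
  obtain ⟨σ, hσ, hσle, hσpolish⟩ := PolishSpace.exists_polishSpace_forall_le τ hτle hτpolish
  obtain ⟨p, hp, hsurj⟩ := @PolishSpace.exists_nat_nat_continuous_surjective Y σ hσpolish _
  exact ⟨p, continuous_le_rng hσle hp, hsurj, fun j =>
    @Continuous.isOpen_preimage _ _ _ σ p hp (s j) (hσ j _ (hτopen j))⟩

theorem exists_continuous_range_eq_isOpen_preimage [TopologicalSpace X] [MeasurableSpace X]
    [BorelSpace X] [Countable κ] {B : κ → Set X} (hB : ∀ j, MeasurableSet (B j)) {F : Set X}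
    (hF : AnalyticSet F) (hne : F.Nonempty) :
    ∃ g : (ℕ → ℕ) → X, Continuous g ∧ range g = F ∧ ∀ j, IsOpen (g ⁻¹' B j) := by
  rw [AnalyticSet] at hF
  obtain ⟨f, hf, hfF⟩ := hF.resolve_left hne.ne_empty
  borelize (ℕ → ℕ)
  obtain ⟨p, hp, hsurj, hopen⟩ :=
    exists_continuous_surjective_isOpen_preimage fun j => hf.measurable (hB j)
  exact ⟨f ∘ p, hf.comp hp, by rw [hsurj.range_comp, hfF], hopen⟩

variable [EMetricSpace X]

theorem IsDyadicNet.exists_isCompact_lt_dimH_image [MeasurableSpace X] [BorelSpace X] [Countable ι]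
    {lev : ι → ℕ} {Q : ι → Set X} {N : ℕ} (hnet : IsDyadicNet lev Q N) {g : (ℕ → ℕ) → X}
    (hg : ∀ i, IsOpen (g ⁻¹' Q i)) {r : ℝ≥0∞} (hr : r < dimH (range g)) :
    ∃ K : Set (ℕ → ℕ), IsCompact K ∧ r < dimH (g '' K) := by
  let _ : MeasurableSpace ι := ⊤
  obtain ⟨t, hrt, htdim⟩ := ENNReal.lt_iff_exists_nnreal_btwn.1 hr
  have ht : (0 : ℝ) < t := NNReal.coe_pos.2 (ENNReal.coe_pos.1 (zero_le.trans_lt hrt))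
  have hpos : 0 < netContent (dyadicWeight lev t) Q (range g) := by
    refine pos_iff_ne_zero.2 fun hzero => ENNReal.top_ne_zero ?_
    rw [← hausdorffMeasure_of_lt_dimH htdim,
      hnet.hausdorffMeasure_eq_zero_of_netContent_eq_zero ht hzero]
  obtain ⟨a, ha, halt⟩ := exists_between hpos
  obtain ⟨K, hK, haK⟩ := hnet.exists_isCompact_le_netContent_image hg halt
  refine ⟨K, hK, hrt.trans_le (le_dimH_of_hausdorffMeasure_ne_zero fun hzero => ?_)⟩
  exact (ha.trans_le haK).ne' (hnet.netContent_eq_zero_of_hausdorffMeasure_eq_zero ht hzero)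

/-- What remains of `L` after removing each set `B j` in which `L` has dimension at most `r`. -/
def dimHKernel (r : ℝ≥0∞) (B : κ → Set X) (L : Set X) : Set X :=
  L \ ⋃ j ∈ {j | dimH (B j ∩ L) ≤ r}, B j

variable {r : ℝ≥0∞} {B : κ → Set X} {L : Set X}

theorem lt_dimH_inter_dimHKernel [Countable κ] {U : Set X} (h : r < dimH (U ∩ L)) :
    r < dimH (U ∩ dimHKernel r B L) := by
  contrapose! h
  have hcover : U ∩ L ⊆ (U ∩ dimHKernel r B L) ∪ ⋃ j ∈ {j | dimH (B j ∩ L) ≤ r}, B j ∩ L := by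
    rintro x ⟨hxU, hxL⟩
    by_cases hx : x ∈ ⋃ j ∈ {j | dimH (B j ∩ L) ≤ r}, B j
    · exact Or.inr (iUnion₂_inter _ L ▸ ⟨hx, hxL⟩)
    · exact Or.inl ⟨hxU, hxL, hx⟩
  calc dimH (U ∩ L)
      ≤ dimH ((U ∩ dimHKernel r B L) ∪ ⋃ j ∈ {j | dimH (B j ∩ L) ≤ r}, B j ∩ L) :=
        dimH_mono hcover
    _ = max (dimH (U ∩ dimHKernel r B L)) (⨆ j ∈ {j | dimH (B j ∩ L) ≤ r}, dimH (B j ∩ L)) := by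
        rw [dimH_union, dimH_bUnion (to_countable _)]
    _ ≤ r := max_le h (iSup₂_le fun _ hj => hj)

theorem dimHKernel_nonempty [Countable κ] (h : r < dimH L) : (dimHKernel r B L).Nonempty := by
  have hlt : r < dimH (univ ∩ dimHKernel r B L) := lt_dimH_inter_dimHKernel (by rwa [univ_inter])
  rw [univ_inter] at hlt
  by_contra! hempty
  simp [hempty] at hlt

theorem lt_dimH_inter_dimHKernel_of_nonempty [Countable κ] {j : κ}
    (h : (B j ∩ dimHKernel r B L).Nonempty) : r < dimH (B j ∩ dimHKernel r B L) := by
  obtain ⟨x, hxB, -, hx⟩ := h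
  exact lt_dimH_inter_dimHKernel (not_le.1 fun hle => hx (mem_biUnion hle hxB))

theorem isCompact_dimHKernel_image {Y : Type*} [TopologicalSpace Y] {g : Y → X}
    (hg : Continuous g) (hgB : ∀ j, IsOpen (g ⁻¹' B j)) {K : Set Y} (hK : IsCompact K) :
    IsCompact (dimHKernel r B (g '' K)) := by
  rw [dimHKernel, ← image_sdiff_preimage, preimage_iUnion₂]
  exact (hK.diff (isOpen_biUnion fun j _ => hgB j)).image hg

theorem exists_closed_subset_with_uniform_dimension_general [MeasurableSpace X] [BorelSpace X]
    [Countable ι] [Countable κ] {lev : ι → ℕ} {Q : ι → Set X} {N : ℕ} (hnet : IsDyadicNet lev Q N)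
    (hQ : ∀ i, MeasurableSet (Q i)) (hB : ∀ j, MeasurableSet (B j)) {F : Set X}
    (hF : AnalyticSet F) (hr : r < dimH F) :
    ∃ H : Set X, H.Nonempty ∧ IsCompact H ∧ H ⊆ F ∧
      ∀ j, (B j ∩ H).Nonempty → r < dimH (B j ∩ H) := by
  have hne : F.Nonempty := nonempty_iff_ne_empty.2 fun hempty => by simp [hempty] at hr
  obtain ⟨g, hg, rfl, hopen⟩ :=
    exists_continuous_range_eq_isOpen_preimage (B := Sum.elim Q B) (Sum.forall.2 ⟨hQ, hB⟩) hF hne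
  obtain ⟨K, hK, hrK⟩ := hnet.exists_isCompact_lt_dimH_image (fun i => hopen (.inl i)) hr
  exact ⟨dimHKernel r B (g '' K), dimHKernel_nonempty hrK,
    isCompact_dimHKernel_image hg (fun j => hopen (.inr j)) hK,
    sdiff_subset.trans (image_subset_range g K), fun _ => lt_dimH_inter_dimHKernel_of_nonempty⟩

end UniformDimension

theorem exists_closed_subset_with_uniform_dimension {d : ℕ} (hd : 1 ≤ d) (s : ℝ)
    (F : Set (Fin d → AddCircle (1 : ℝ))) (hF : AnalyticSet F)
    (hdim : ENNReal.ofReal s < dimH F) :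
    ∃ H : Set (Fin d → AddCircle (1 : ℝ)), H.Nonempty ∧ IsClosed H ∧ H ⊆ F ∧
      ∀ (n : ℕ) (k : Fin d → Fin (2 ^ n)), (dyadicCube d n k ∩ H).Nonempty →
        ENNReal.ofReal s < dimH (dyadicCube d n k ∩ H) := by
  have hmeas : ∀ i : Σ n, Fin d → Fin (2 ^ n), MeasurableSet (dyadicCube d i.1 i.2) :=
    fun i => measurableSet_dyadicCube d i.1 i.2
  obtain ⟨H, hne, hcompact, hHF, hH⟩ := exists_closed_subset_with_uniform_dimension_general
    (isDyadicNet_dyadicCube d) hmeas hmeas hF hdim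
  exact ⟨H, hne, hcompact.isClosed, hHF, fun n k => hH ⟨n, k⟩⟩
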